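/- Let G be a nontrivial connected graph of order n with rvx_3(G) = ℓ, and let G' be obtained from G by adding a new vertex v adjacent to q vertices of G. If q ≥ n − ℓ, then rvx_3(G') ≤ ℓ. -/

import Mathlib

/-- A vertex-coloring `c` makes `G` vertex-rainbow `k`-tree-connected using at most `m`
colors (on Steiner vertices): every `k`-subset `S` of vertices admits a connected subgraph
(equivalently, a Steiner tree) containing `S` whose vertices outside `S` receive pairwise
distinct colors, all drawn from a palette of `m` colors. -/
def hasRvxColoring {V : Type*} (G : SimpleGraph V) (k m : ℕ) : Prop :=
  ∃ c : V → ℕ, ∀ S : Finset V, S.card = k →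
    ∃ T : G.Subgraph, T.Connected ∧ ↑S ⊆ T.verts ∧
      Set.InjOn c (T.verts \ ↑S) ∧ ∀ v ∈ T.verts \ (↑S : Set V), c v < m

/-- The `k`-vertex-rainbow index `rvx_k(G)`. -/
noncomputable def rvx {V : Type*} (G : SimpleGraph V) (k : ℕ) : ℕ :=
  sInf {m | hasRvxColoring G k m}

/-- The Steiner distance of a vertex set `S`: the minimum number of edges of a connected
subgraph of `G` containing `S`. -/
noncomputable def steinerDist {V : Type*} (G : SimpleGraph V) (S : Set V) : ℕ :=
  sInf {m | ∃ T : G.Subgraph, T.Connected ∧ S ⊆ T.verts ∧ T.edgeSet.ncard = m}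

/-- The Steiner `k`-diameter of `G`. -/
noncomputable def sdiam {V : Type*} [Fintype V] [DecidableEq V]
    (G : SimpleGraph V) (k : ℕ) : ℕ :=
  (Finset.univ.powersetCard k).sup fun S : Finset V => steinerDist G (S : Set V)

/-- `t(n,k,ℓ)`: the minimal number of edges of a connected graph of order `n`
with `rvx_k(G) ≤ ℓ`. -/
noncomputable def minSize (n k l : ℕ) : ℕ :=
  sInf {m | ∃ G : SimpleGraph (Fin n), G.Connected ∧ rvx G k ≤ l ∧ G.edgeSet.ncard = m}

/-!
Let `W` be the complement of the set `X` of neighbours of the new vertex `v`, so that `|W| ≤ ℓ`.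
Giving each vertex of `W` a neighbour closer to a fixed vertex of `X` yields a forest with at most
`|W|` parents. Together with `v` they connect everything, which is one colour too many. A vertex of
`X` with two neighbours in `W` saves a colour, and so does an ear: a path in `W` with two distinct
ends, both of which have neighbours in `X`.

Otherwise every component of `G - X` is attached to `X` at a single vertex, its gate, and distinct
gates have disjoint neighbourhoods in `X`. Start from the given colouring of `G`, for which only the
triples `{v, a, b}` matter: take a rainbow tree for a triple `{a, b, z}` of `G`, delete a part
containing `z` and let `v` reconnect the rest. If for some `a, b` no choice of `z` works, then
`G - X` has at most two components. If it has one, its gate is adjacent to all of `X` except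
possibly one vertex; if it has two, the neighbourhoods of the gates cover `X` and each neighbour of
one gate is adjacent to a neighbour of the other. In both cases the parents suffice as colours: a
triple in `X` is joined by `v` alone, and a triple of `G` that meets `W` is joined without `v`.
-/

open Set

section ReachableIn

variable {V V' : Type*} {G : SimpleGraph V} {s t Q : Set V} {u v w : V}

/-- Reachability of `v` from `u` inside the vertex set `s`; it forces `u, v ∈ s`. Unlike
reachability in `G.induce s`, it is a relation on `V` and can be stated without membership
proofs. -/
def ReachableIn (G : SimpleGraph V) (s : Set V) (u v : V) : Prop :=
  ∃ p : G.Walk u v, ∀ z ∈ p.support, z ∈ s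

namespace ReachableIn

theorem refl (hu : u ∈ s) : ReachableIn G s u u :=
  ⟨.nil, by simpa using hu⟩

theorem left_mem : ReachableIn G s u v → u ∈ s
  | ⟨p, hp⟩ => hp u p.start_mem_support

theorem right_mem : ReachableIn G s u v → v ∈ s
  | ⟨p, hp⟩ => hp v p.end_mem_support

theorem symm : ReachableIn G s u v → ReachableIn G s v u
  | ⟨p, hp⟩ => ⟨p.reverse, by simpa using hp⟩

theorem trans : ReachableIn G s u v → ReachableIn G s v w → ReachableIn G s u w
  | ⟨p, hp⟩, ⟨q, hq⟩ => ⟨p.append q, fun z hz =>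
      (SimpleGraph.Walk.mem_support_append_iff p q |>.mp hz).elim (hp z) (hq z)⟩

theorem mono (hst : s ⊆ t) : ReachableIn G s u v → ReachableIn G t u v
  | ⟨p, hp⟩ => ⟨p, fun z hz => hst (hp z hz)⟩

theorem of_adj (huv : G.Adj u v) (hu : u ∈ s) (hv : v ∈ s) : ReachableIn G s u v :=
  ⟨huv.toWalk, by simp [hu, hv]⟩

theorem head (hu : u ∈ s) (huv : G.Adj u v) (h : ReachableIn G s v w) : ReachableIn G s u w :=
  (of_adj huv hu h.left_mem).trans h

theorem map {G' : SimpleGraph V'} (f : G →g G') :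
    ReachableIn G s u v → ReachableIn G' (f '' s) (f u) (f v)
  | ⟨p, hp⟩ => ⟨p.map f, by
      simp only [SimpleGraph.Walk.support_map, List.mem_map]
      rintro _ ⟨z, hz, rfl⟩
      exact mem_image_of_mem f (hp z hz)⟩

theorem exists_exit (h : ReachableIn G s u v) (hu : u ∈ Q) (hv : v ∉ Q) :
    ∃ a b, ReachableIn G (s ∩ Q) u a ∧ b ∈ s \ Q ∧ G.Adj a b := by
  obtain ⟨p, hp⟩ := h
  induction p with
  | nil => exact absurd hu hv
  | @cons u y v huy p ih =>
    simp only [SimpleGraph.Walk.support_cons, List.mem_cons, forall_eq_or_imp] at hp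
    by_cases hy : y ∈ Q
    · obtain ⟨a, b, hya, hb, hab⟩ := ih hy hv hp.2
      exact ⟨a, b, hya.head ⟨hp.1, hu⟩ huy, hb, hab⟩
    · exact ⟨u, y, refl ⟨hp.1, hu⟩, ⟨hp.2 y p.start_mem_support, hy⟩, huy⟩

end ReachableIn

theorem reachableIn_image_Icc {y : ℕ → V} {i j : ℕ} (hij : i ≤ j)
    (hy : ∀ k ∈ Ico i j, G.Adj (y k) (y (k + 1))) :
    ReachableIn G (y '' Icc i j) (y i) (y j) := by
  induction j, hij using Nat.le_induction with
  | base => exact .refl ⟨i, by simp⟩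
  | succ j hij ih =>
    refine ((ih fun k hk => hy k ⟨hk.1, hk.2.trans j.lt_succ_self⟩).mono
      (image_mono (Icc_subset_Icc_right j.le_succ))).trans
      (.of_adj (hy j ⟨hij, j.lt_succ_self⟩) ⟨j, ?_, rfl⟩ ⟨j + 1, ?_, rfl⟩) <;> grind

theorem reachableIn_of_connected_induce (h : (G.induce s).Connected) (hu : u ∈ s) (hv : v ∈ s) :
    ReachableIn G s u v := by
  obtain ⟨p⟩ := h.preconnected ⟨u, hu⟩ ⟨v, hv⟩
  have hp : ReachableIn (G.induce s) univ ⟨u, hu⟩ ⟨v, hv⟩ := ⟨p, fun z _ => mem_univ z⟩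
  exact (hp.map (SimpleGraph.Embedding.induce s).toHom).mono (image_subset_iff.mpr fun z _ => z.2)

theorem connected_induce_of_reachableIn (hu : u ∈ s) (h : ∀ v ∈ s, ReachableIn G s u v) :
    (G.induce s).Connected := by
  rw [SimpleGraph.connected_iff_exists_forall_reachable]
  refine ⟨⟨u, hu⟩, fun v => ?_⟩
  obtain ⟨p, hp⟩ := h v v.2
  exact ⟨p.induce s hp⟩

theorem connected_induce_of_dominated (hs : (G.induce s).Connected) (hst : s ⊆ t)
    (h : ∀ v ∈ t, v ∈ s ∨ ∃ w ∈ s, G.Adj v w) : (G.induce t).Connected := by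
  obtain ⟨⟨r, hr⟩⟩ := hs.nonempty
  have reach (v) (hv : v ∈ s) : ReachableIn G t r v :=
    (reachableIn_of_connected_induce hs hr hv).mono hst
  refine connected_induce_of_reachableIn (hst hr) fun v hv => ?_
  rcases h v hv with hvs | ⟨w, hw, hvw⟩
  · exact reach v hvs
  · exact (reach w hw).trans (.of_adj hvw.symm (hst hw) hv)

end ReachableIn

section RainbowTree

variable {V V' C : Type*} {G : SimpleGraph V} {k l : ℕ}

/-- `S` has a Steiner tree whose vertices outside `S` receive distinct colours from the palette `K`.
The tree is represented by its vertex set `U`, of which only connectedness of the induced graph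
matters. -/
def HasRainbowTree (G : SimpleGraph V) (c : V → C) (K : Set C) (S : Set V) : Prop :=
  ∃ U, (G.induce U).Connected ∧ S ⊆ U ∧ InjOn c (U \ S) ∧ MapsTo c (U \ S) K

theorem hasRainbowTree_of_dominating {c : V → C} {K : Set C} {S D : Set V}
    (hD : (G.induce D).Connected) (hS : ∀ s ∈ S, s ∈ D ∨ ∃ d ∈ D, G.Adj s d)
    (hinj : InjOn c (D \ S)) (hmaps : MapsTo c (D \ S) K) : HasRainbowTree G c K S :=
  ⟨D ∪ S, connected_induce_of_dominated hD subset_union_left fun v hv => hv.elim .inl (hS v),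
    subset_union_right, by rwa [union_sdiff_right], by rwa [union_sdiff_right]⟩

theorem HasRainbowTree.map {G' : SimpleGraph V'} (f : G ↪g G') {c : V' → C} {K : Set C} {S : Set V}
    (h : HasRainbowTree G (c ∘ f) K S) : HasRainbowTree G' c K (f '' S) := by
  obtain ⟨U, hU, hSU, hinj, hmaps⟩ := h
  obtain ⟨⟨r, hr⟩⟩ := hU.nonempty
  refine ⟨f '' U, connected_induce_of_reachableIn (mem_image_of_mem f hr) ?_, image_mono hSU,
    ?_, ?_⟩
  · rintro _ ⟨v, hv, rfl⟩
    exact (reachableIn_of_connected_induce hU hr hv).map f.toHom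
  all_goals rw [← image_sdiff f.injective]
  · exact hinj.image_of_comp
  · exact mapsTo_image_iff.mpr hmaps

theorem hasRvxColoring_iff : hasRvxColoring G k l ↔
    ∃ c : V → ℕ, ∀ S : Set V, S.encard = k → HasRainbowTree G c (Iio l) S := by
  refine exists_congr fun c => ⟨fun h S hS => ?_, fun h S hS => ?_⟩
  · have hfin : S.Finite := finite_of_encard_eq_coe hS
    obtain ⟨T, hT, hST, hinj, hlt⟩ := h hfin.toFinset (by
      rwa [← Nat.cast_inj (R := ℕ∞), ← encard_coe_eq_coe_finsetCard, hfin.coe_toFinset])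
    rw [hfin.coe_toFinset] at hST hinj hlt
    exact ⟨T.verts, hT.induce_verts, hST, hinj, hlt⟩
  · obtain ⟨U, hU, hSU, hinj, hmaps⟩ := h S (by rw [encard_coe_eq_coe_finsetCard, hS])
    exact ⟨_, SimpleGraph.connected_induce_iff.mp hU, hSU, hinj, hmaps⟩

theorem hasRvxColoring_of_palette (κ : V → C) {K : Set C} (hK : K.encard ≤ l)
    (h : ∀ S : Set V, S.encard = k → HasRainbowTree G κ K S) : hasRvxColoring G k l := by
  obtain ⟨e, he, hinj⟩ := (finite_of_encard_le_coe hK).exists_injOn_of_encard_le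
    (t := Iio l) (by rwa [← Finset.coe_Iio, encard_coe_eq_coe_finsetCard, Nat.card_Iio])
  refine hasRvxColoring_iff.mpr ⟨e ∘ κ, fun S hS => ?_⟩
  obtain ⟨U, hU, hSU, hκ, hmaps⟩ := h S hS
  exact ⟨U, hU, hSU, hinj.comp hκ hmaps, fun v hv => he (hmaps hv)⟩

theorem hasRvxColoring_of_dominating {D : Set V} (hD : (G.induce D).Connected)
    (hdom : ∀ v, v ∈ D ∨ ∃ d ∈ D, G.Adj v d) (hcard : D.encard ≤ l) : hasRvxColoring G k l :=
  hasRvxColoring_of_palette id hcard fun _ _ =>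
    hasRainbowTree_of_dominating hD (fun s _ => hdom s) (injOn_id _) fun _ hv => hv.1

end RainbowTree

section AddVertex

variable {V C : Type*} {G : SimpleGraph V} {X A W : Set V} {f : V → V} {ρ : V → ℕ} {k l : ℕ}

/-- The graph `G` with a new vertex `none` joined to the vertices in `X`. -/
def addVertex (G : SimpleGraph V) (X : Set V) : SimpleGraph (Option V) :=
  SimpleGraph.fromRel fun x y =>
    (∃ a b, x = some a ∧ y = some b ∧ G.Adj a b) ∨ (x = none ∧ ∃ b ∈ X, y = some b)

@[simp]
theorem addVertex_adj_some_some {a b : V} :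
    (addVertex G X).Adj (some a) (some b) ↔ G.Adj a b := by
  have := @SimpleGraph.Adj.ne V G a b
  simpa [addVertex, G.adj_comm b a] using this

@[simp]
theorem addVertex_adj_some_none {a : V} : (addVertex G X).Adj (some a) none ↔ a ∈ X := by
  simp [addVertex]

@[simp]
theorem addVertex_adj_none_some {a : V} : (addVertex G X).Adj none (some a) ↔ a ∈ X := by
  simp [addVertex]

/-- `G` as an induced subgraph of `addVertex G X`. -/
def addVertexEmbedding (G : SimpleGraph V) (X : Set V) : G ↪g addVertex G X :=
  ⟨.some, addVertex_adj_some_some⟩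

theorem exists_image_some_eq {S : Set (Option V)} (hS : none ∉ S) :
    ∃ S₀ : Set V, some '' S₀ = S :=
  subset_range_iff_exists_image_eq.mp fun _ ho =>
    Option.ne_none_iff_exists.mp (ne_of_mem_of_not_mem ho hS)

/-- A parent function: each `w ∈ W` has the neighbour `f w`, of smaller rank `ρ`. Following parents
from a vertex of `W` therefore leaves `W`. -/
structure IsDescent (G : SimpleGraph V) (W : Set V) (f : V → V) (ρ : V → ℕ) : Prop where
  adj : ∀ w ∈ W, G.Adj w (f w)
  lt : ∀ w ∈ W, ρ (f w) < ρ w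

theorem IsDescent.mono (hf : IsDescent G W f ρ) (hA : A ⊆ W) : IsDescent G A f ρ :=
  ⟨fun w hw => hf.adj w (hA hw), fun w hw => hf.lt w (hA hw)⟩

theorem exists_isDescent_compl (hG : G.Connected) {x : V} (hx : x ∈ X) :
    ∃ f, IsDescent G Xᶜ f (G.dist · x) := by
  have step (w : V) (hw : w ∈ Xᶜ) : ∃ y, G.Adj w y ∧ G.dist y x < G.dist w x := by
    obtain ⟨p, hp⟩ := hG.exists_walk_length_eq_dist w x
    cases p with
    | nil => exact absurd hx hw
    | cons h p => exact ⟨_, h, by grind [SimpleGraph.dist_le p, SimpleGraph.Walk.length_cons]⟩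
  choose! f hf using step
  exact ⟨f, fun w hw => (hf w hw).1, fun w hw => (hf w hw).2⟩

theorem IsDescent.eq_of_adj (hG : G.Connected) {u x : V} (hf : IsDescent G W f (G.dist · x))
    (hu : u ∈ W) (hux : G.Adj u x) : f u = x := by
  have := hf.lt u hu
  rw [SimpleGraph.dist_eq_one_iff_adj.mpr hux] at this
  exact hG.dist_eq_zero_iff.mp (Nat.lt_one_iff.mp this)

/-- Every vertex of `A` is joined to `X` inside `A`, so that `A` becomes connected once a vertex
adjacent to all of `X` is added. -/
def IsAnchored (G : SimpleGraph V) (X A : Set V) : Prop :=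
  ∀ u ∈ A, ∃ x ∈ X, ReachableIn G A u x

theorem IsAnchored.connected_induce (hA : IsAnchored G X A) :
    ((addVertex G X).induce (insert none (some '' A))).Connected := by
  refine connected_induce_of_reachableIn (mem_insert _ _) fun v hv => ?_
  rcases hv with rfl | ⟨u, hu, rfl⟩
  · exact .refl (mem_insert _ _)
  · obtain ⟨x, hx, hux⟩ := hA u hu
    exact .head (mem_insert _ _) (addVertex_adj_none_some.mpr hx) <|
      ((hux.map (addVertexEmbedding G X).toHom).mono (subset_insert _ _)).symm

theorem IsAnchored.union_image (hA : IsAnchored G X A) (hf : IsDescent G W f ρ)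
    (h : ∀ u ∈ f '' W, u ∈ X ∨ u ∈ W ∨ u ∈ A) : IsAnchored G X (A ∪ f '' W) := by
  intro u
  induction u using (measure ρ).wf.induction with
  | h u ih =>
    intro hu
    have ofA (hu : u ∈ A) : ∃ x ∈ X, ReachableIn G (A ∪ f '' W) u x := by
      obtain ⟨x, hx, hux⟩ := hA u hu
      exact ⟨x, hx, hux.mono subset_union_left⟩
    rcases hu.elim (.inr ∘ .inr) (h u) with huX | huW | huA
    · exact ⟨u, huX, .refl hu⟩
    · obtain ⟨x, hx, hux⟩ := ih (f u) (hf.lt u huW) (.inr (mem_image_of_mem f huW))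
      exact ⟨x, hx, .head hu (hf.adj u huW) hux⟩
    · exact ofA huA

theorem IsAnchored.image (hf : IsDescent G W f ρ) (h : ∀ u ∈ f '' W, u ∈ X ∨ u ∈ W) :
    IsAnchored G X (f '' W) := by
  simpa using IsAnchored.union_image (A := ∅) (by simp [IsAnchored]) hf
    fun u hu => (h u hu).imp_right .inl

theorem hasRvxColoring_of_connected [Nontrivial V] (hG : G.Connected) {x : V}
    (hl : ({x}ᶜ : Set V).encard ≤ l) : hasRvxColoring G k l := by
  obtain ⟨f, hf⟩ := exists_isDescent_compl hG (mem_singleton x)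
  have hA : IsAnchored G {x} (f '' {x}ᶜ) := .image hf fun u _ => em (u ∈ ({x} : Set V))
  have reach {u : V} (hu : u ∈ f '' {x}ᶜ) : ReachableIn G (f '' {x}ᶜ) u x := by
    simpa using hA u hu
  obtain ⟨w, hw⟩ := exists_ne x
  have hx := (reach (mem_image_of_mem f hw)).right_mem
  refine hasRvxColoring_of_dominating
    (connected_induce_of_reachableIn hx fun u hu => (reach hu).symm) (fun v => ?_)
    ((encard_image_le f _).trans hl)
  by_cases hv : v = x
  · exact .inl (hv ▸ hx)
  · exact .inr ⟨f v, mem_image_of_mem f hv, hf.adj v hv⟩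

theorem IsAnchored.hasRainbowTree (hA : IsAnchored G X A) {κ : Option V → C} {K : Set C}
    {S : Set (Option V)} (hS : ∀ s, some s ∈ S → s ∈ X ∨ s ∈ A ∨ ∃ a ∈ A, G.Adj s a)
    (hinj : InjOn κ (insert none (some '' A) \ S))
    (hmaps : MapsTo κ (insert none (some '' A) \ S) K) : HasRainbowTree (addVertex G X) κ K S := by
  refine hasRainbowTree_of_dominating hA.connected_induce ?_ hinj hmaps
  rintro (_ | s) hs
  · exact .inl (mem_insert _ _)
  · rcases hS s hs with hX | hA | ⟨a, ha, hsa⟩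
    · exact .inr ⟨none, mem_insert _ _, addVertex_adj_some_none.mpr hX⟩
    · exact .inl (.inr (mem_image_of_mem _ hA))
    · exact .inr ⟨a, .inr (mem_image_of_mem _ ha), addVertex_adj_some_some.mpr hsa⟩

theorem encard_image_add_one_le {α β : Type*} {g : α → β} {s : Set α} {a b : α} (ha : a ∈ s)
    (hb : b ∈ s) (hab : a ≠ b) (h : g a = g b) : (g '' s).encard + 1 ≤ s.encard := by
  have : g '' s = g '' (s \ {b}) :=
    (image_subset_iff.mpr fun z hz => by
      by_cases hzb : z = b
      · exact ⟨a, ⟨ha, hab⟩, hzb ▸ h⟩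
      · exact ⟨z, ⟨hz, hzb⟩, rfl⟩).antisymm (image_mono sdiff_subset)
  rw [this, ← encard_sdiff_singleton_add_one hb]
  gcongr
  exact encard_image_le g _

theorem hasRvxColoring_addVertex_of_common_neighbor (hG : G.Connected) (hl : Xᶜ.encard ≤ l)
    {x u v : V} (hx : x ∈ X) (hu : u ∉ X) (hv : v ∉ X) (huv : u ≠ v) (hux : G.Adj u x)
    (hvx : G.Adj v x) : hasRvxColoring (addVertex G X) k l := by
  obtain ⟨f, hf⟩ := exists_isDescent_compl hG hx
  have hA : IsAnchored G X (f '' Xᶜ) := .image hf fun u _ => em (u ∈ X)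
  refine hasRvxColoring_of_palette id (K := insert none (some '' (f '' Xᶜ))) ?_ fun S _ =>
    hA.hasRainbowTree (fun s _ => ?_) (injOn_id _) fun _ hv => hv.1
  · calc (insert none (some '' (f '' Xᶜ))).encard
      _ ≤ (f '' Xᶜ).encard + 1 :=
          (encard_insert_le _ _).trans (add_le_add_left (encard_image_le _ _) 1)
      _ ≤ Xᶜ.encard := encard_image_add_one_le hu hv huv <|
          (hf.eq_of_adj hG hu hux).trans (hf.eq_of_adj hG hv hvx).symm
      _ ≤ l := hl
  · by_cases hs : s ∈ X
    · exact .inl hs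
    · exact .inr (.inr ⟨f s, mem_image_of_mem f hs, hf.adj s hs⟩)

end AddVertex

section Ear

variable {V : Type*} {G : SimpleGraph V} {X : Set V} {y : ℕ → V} {n k l : ℕ}

/-- The path `y 0, …, y n` with `n ≥ 1` runs outside `X` and both its ends have neighbours in `X`.
These neighbours may coincide. -/
structure IsEar (G : SimpleGraph V) (X : Set V) (y : ℕ → V) (n : ℕ) : Prop where
  pos : 1 ≤ n
  injOn : InjOn y (Iic n)
  adj : ∀ k < n, G.Adj (y k) (y (k + 1))
  notMem : ∀ k ≤ n, y k ∉ X
  left : ∃ x ∈ X, G.Adj (y 0) x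
  right : ∃ x ∈ X, G.Adj (y n) x

theorem isEar_getVert {u v : V} {p : G.Walk u v} (hp : p.IsPath) (huv : u ≠ v)
    (hpX : ∀ z ∈ p.support, z ∉ X) (hu : ∃ x ∈ X, G.Adj u x) (hv : ∃ x ∈ X, G.Adj v x) :
    IsEar G X p.getVert p.length where
  pos := Nat.one_le_iff_ne_zero.mpr fun h => huv (SimpleGraph.Walk.eq_of_length_eq_zero h)
  injOn := hp.getVert_injOn
  adj _ hk := p.adj_getVert_succ hk
  notMem k _ := hpX _ (p.getVert_mem_support k)
  left := by simpa using hu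
  right := by simpa using hv

theorem isAnchored_insert_image_Icc {x : V} {i j e : ℕ} (hx : x ∈ X)
    (hy : ∀ k ∈ Ico i j, G.Adj (y k) (y (k + 1))) (he : i ≤ j → e ∈ Icc i j)
    (hex : G.Adj (y e) x) : IsAnchored G X (insert x (y '' Icc i j)) := by
  rintro _ (rfl | ⟨k, hk, rfl⟩)
  · exact ⟨_, hx, .refl (mem_insert _ _)⟩
  · have from_left (m) (hm : m ∈ Icc i j) :
        ReachableIn G (insert x (y '' Icc i j)) (y i) (y m) :=
      (reachableIn_image_Icc hm.1 fun k hk => hy k ⟨hk.1, hk.2.trans_le hm.2⟩).mono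
        ((image_mono (Icc_subset_Icc_right hm.2)).trans (subset_insert _ _))
    have hke := (from_left k hk).symm.trans (from_left e (he (hk.1.trans hk.2)))
    exact ⟨x, hx, hke.trans (.of_adj hex hke.right_mem (mem_insert _ _))⟩

open Classical in
/-- The colours of the vertices of an ear and of `X`. No tree has both ends of the ear among its
inner vertices, nor `y 1` together with `y n`, so that `X` may share the colour of `y 0` and `y 1`
that of `y n`. -/
noncomputable def earColor (X : Set V) (y : ℕ → V) (n : ℕ) (z : V) : V :=
  if z ∈ X then y 0 else if z = y 1 then y n else z

theorem IsEar.earColor_apply (hy : IsEar G X y n) {i : ℕ} (hi : i ≤ n) :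
    earColor X y n (y i) = y (if i = 1 then n else i) := by
  have : y i = y 1 ↔ i = 1 := hy.injOn.eq_iff hi hy.pos
  simp only [earColor, if_neg (hy.notMem i hi), this]
  split_ifs <;> rfl

theorem IsEar.injOn_mapsTo_earColor (hy : IsEar G X y n) {x : V} (hx : x ∈ X) {s : Set ℕ}
    (hs : s ⊆ Ioo 0 n ∨ s ⊆ Ioc 1 n) :
    InjOn (earColor X y n) (insert x (y '' s)) ∧
      MapsTo (earColor X y n) (insert x (y '' s)) (y '' Iic n \ {y 1}) := by
  have color_x : earColor X y n x = y 0 := if_pos hx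
  have color_y (i) (hi : i ∈ s) :
      ∃ j ≤ n, j ≠ 0 ∧ j ≠ 1 ∧ j = (if i = 1 then n else i) ∧ earColor X y n (y i) = y j := by
    refine ⟨_, ?_, ?_, ?_, rfl, hy.earColor_apply ?_⟩ <;> grind
  have inj (i) (hi : i ≤ n) (j) (hj : j ≤ n) (h : y i = y j) : i = j := hy.injOn hi hj h
  refine ⟨?_, ?_⟩
  · rintro _ (rfl | ⟨i, hi, rfl⟩) _ (rfl | ⟨j, hj, rfl⟩) h <;> grind
  · have := hy.pos
    rintro _ (rfl | ⟨i, hi, rfl⟩) <;> grind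

theorem IsEar.exists_isAnchored (hy : IsEar G X y n) (T : Set V) :
    ∃ A, IsAnchored G X A ∧ y '' Iic n ∩ T ⊆ A ∧ InjOn (earColor X y n) (A \ T) ∧
      MapsTo (earColor X y n) (A \ T) (y '' Iic n \ {y 1}) := by
  classical
  suffices ∃ x ∈ X, ∃ i j e, j ≤ n ∧ (i ≤ j → e ∈ Icc i j) ∧ G.Adj (y e) x ∧
      y '' Iic n ∩ T ⊆ y '' Icc i j ∧
        ∃ s, (s ⊆ Ioo 0 n ∨ s ⊆ Ioc 1 n) ∧ y '' Icc i j \ T ⊆ y '' s by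
    obtain ⟨x, hx, i, j, e, hj, he, hex, hT, s, hs, hsub⟩ := this
    have hAs : insert x (y '' Icc i j) \ T ⊆ insert x (y '' s) := by grind
    obtain ⟨hinj, hmaps⟩ := hy.injOn_mapsTo_earColor hx hs
    exact ⟨_, isAnchored_insert_image_Icc hx (fun k hk => hy.adj k (hk.2.trans_le hj)) he hex,
      hT.trans (subset_insert _ _), hinj.mono hAs, hmaps.mono_left hAs⟩
  obtain ⟨hpos, -, -, -, ⟨x, hx, hux⟩, ⟨x', hx', hvx⟩⟩ := hy
  -- If `y 0 ∈ T`, the path is attached to `X` at `y 0`, and `y n` is kept only if `T` needs it;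
  -- otherwise `y 0` is not needed, and `y 1` is kept only if it is in `T`.
  by_cases h0 : y 0 ∈ T
  · refine ⟨x, hx, 0, if y n ∈ T then n else n - 1, 0, ?_, ?_, hux, ?_, Ioo 0 n,
      .inl subset_rfl, ?_⟩
    all_goals grind
  · refine ⟨x', hx', if y 1 ∈ T then 1 else 2, n, n, ?_, ?_, hvx, ?_, Ioc 1 n, .inr subset_rfl, ?_⟩
    all_goals grind

theorem encard_inl_union_inr_le {α β : Type*} {s : Set α} {t : Set β} {b : β} (hb : b ∈ t) :
    (.inl '' insert none (some '' s) ∪ .inr '' (t \ {b}) : Set (Option α ⊕ β)).encard ≤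
      s.encard + t.encard := calc
  _ ≤ (insert none (some '' s)).encard + (t \ {b}).encard :=
    (encard_union_le _ _).trans (add_le_add (encard_image_le _ _) (encard_image_le _ _))
  _ ≤ (s.encard + 1) + (t \ {b}).encard := by
    gcongr
    exact (encard_insert_le _ _).trans (add_le_add_left (encard_image_le _ _) 1)
  _ = s.encard + t.encard := by rw [add_assoc, add_comm 1, encard_sdiff_singleton_add_one hb]

theorem hasRvxColoring_addVertex_of_isEar (hG : G.Connected) (hl : Xᶜ.encard ≤ l)
    (hy : IsEar G X y n) : hasRvxColoring (addVertex G X) k l := by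
  classical
  obtain ⟨x, hx, -⟩ := hy.left
  obtain ⟨f, hf⟩ := exists_isDescent_compl hG hx
  set R := y '' Iic n
  have hRX : R ⊆ Xᶜ := image_subset_iff.mpr hy.notMem
  set P := f '' (Xᶜ \ R)
  replace hf : IsDescent G (Xᶜ \ R) f (G.dist · x) := hf.mono sdiff_subset
  let κ : Option V → Option V ⊕ V := fun o =>
    o.elim (.inl none) fun z => if z ∈ P then .inl (some z) else .inr (earColor X y n z)
  let K : Set (Option V ⊕ V) := .inl '' insert none (some '' P) ∪ .inr '' (R \ {y 1})
  have hK : K.encard ≤ l := calc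
    K.encard ≤ P.encard + R.encard := encard_inl_union_inr_le (mem_image_of_mem y hy.pos)
    _ ≤ (Xᶜ \ R).encard + R.encard := add_le_add_left (encard_image_le _ _) _
    _ = Xᶜ.encard := encard_sdiff_add_encard_of_subset hRX
    _ ≤ l := hl
  refine hasRvxColoring_of_palette κ hK fun S _ => ?_
  obtain ⟨A, hA, hRA, hinj, hmaps⟩ := hy.exists_isAnchored (P ∪ {z | some z ∈ S})
  refine (hA.union_image hf fun u hu => ?_).hasRainbowTree (fun s hs => ?_) ?_ ?_
  · have : u ∈ R → u ∈ A := fun hR => hRA ⟨hR, .inl hu⟩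
    grind
  · by_cases hsX : s ∈ X
    · exact .inl hsX
    by_cases hsR : s ∈ R
    · exact .inr (.inl (.inl (hRA ⟨hsR, .inr hs⟩)))
    · exact .inr (.inr ⟨f s, .inr (mem_image_of_mem f ⟨hsX, hsR⟩), hf.adj s ⟨hsX, hsR⟩⟩)
  · rintro _ ⟨rfl | ⟨a, ha, rfl⟩, haS⟩ _ ⟨rfl | ⟨b, hb, rfl⟩, hbS⟩ h <;> grind [InjOn]
  · rintro _ ⟨rfl | ⟨a, ha, rfl⟩, haS⟩ <;> grind [MapsTo]

theorem hasRvxColoring_addVertex_of_reachableIn_compl (hG : G.Connected) (hl : Xᶜ.encard ≤ l)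
    {u v : V} (h : ReachableIn G Xᶜ u v) (huv : u ≠ v) (hu : ∃ x ∈ X, G.Adj u x)
    (hv : ∃ x ∈ X, G.Adj v x) : hasRvxColoring (addVertex G X) k l := by
  classical
  obtain ⟨p, hp⟩ := h
  exact hasRvxColoring_addVertex_of_isEar hG hl <| isEar_getVert p.bypass_isPath huv
    (fun z hz => hp z (p.support_bypass_subset_support hz)) hu hv

end Ear

section Gate

variable {V : Type*} {G : SimpleGraph V} {X U : Set V} {f : V → V} {ρ : V → ℕ} {t u w z : V}
  {k l : ℕ}

/-- `t ∉ X` is the only vertex of its component of `G - X` that may have neighbours in `X`. -/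
structure IsGate (G : SimpleGraph V) (X : Set V) (t : V) : Prop where
  notMem : t ∉ X
  eq_of_adj : ∀ w x, ReachableIn G Xᶜ w t → x ∈ X → G.Adj w x → w = t

theorem IsGate.reachableIn_inter (ht : IsGate G X t) (hU : (G.induce U).Connected) (hu : u ∈ U)
    (hut : ReachableIn G Xᶜ u t) (hz : z ∈ U) (hzt : ¬ReachableIn G Xᶜ z t) :
    ReachableIn G (U ∩ {w | ReachableIn G Xᶜ w t}) u t ∧ ∃ y ∈ U ∩ X, G.Adj t y := by
  obtain ⟨a, b, hua, ⟨hbU, hbt⟩, hab⟩ :=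
    (reachableIn_of_connected_induce hU hu hz).exists_exit (Q := {w | ReachableIn G Xᶜ w t}) hut hzt
  have hat : ReachableIn G Xᶜ a t := hua.right_mem.2
  have hbX : b ∈ X := by_contra fun hb => hbt (.head hb hab.symm hat)
  obtain rfl := ht.eq_of_adj a b hat hbX hab
  exact ⟨hua, b, ⟨hbU, hbX⟩, hab⟩

theorem IsDescent.exists_reachableIn_map_mem (hf : IsDescent G Xᶜ f ρ) (hw : w ∉ X) :
    ∃ t, ReachableIn G Xᶜ w t ∧ f t ∈ X ∧ (w = t ∨ t ∈ f '' Xᶜ) := by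
  induction w using (measure ρ).wf.induction with
  | h w ih =>
    by_cases hfw : f w ∈ X
    · exact ⟨w, .refl hw, hfw, .inl rfl⟩
    · obtain ⟨t, hwt, hft, ht⟩ := ih (f w) (hf.lt w hw) hfw
      exact ⟨t, .head hw (hf.adj w hw) hwt, hft, .inr (ht.elim (fun h => ⟨w, hw, h⟩) id)⟩

theorem IsGate.map_mem (ht : IsGate G X t) (hf : IsDescent G Xᶜ f ρ) : f t ∈ X := by
  obtain ⟨t', htt', hft', -⟩ := hf.exists_reachableIn_map_mem ht.notMem
  rwa [ht.eq_of_adj t' (f t') htt'.symm hft' (hf.adj t' htt'.right_mem)] at hft'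

theorem IsGate.eq_or_mem_image (ht : IsGate G X t) (hf : IsDescent G Xᶜ f ρ)
    (hw : ReachableIn G Xᶜ w t) : w = t ∨ t ∈ f '' Xᶜ := by
  obtain ⟨t', hwt', hft', h⟩ := hf.exists_reachableIn_map_mem hw.left_mem
  rwa [ht.eq_of_adj t' (f t') (hwt'.symm.trans hw) hft' (hf.adj t' hwt'.right_mem)] at h

/-- The inner vertices of the tree of parents on the component of the gate `t`, together with
`t`. -/
def branch (G : SimpleGraph V) (X : Set V) (f : V → V) (t : V) : Set V :=
  insert t (f '' Xᶜ ∩ {w | ReachableIn G Xᶜ w t})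

theorem IsGate.reachableIn_of_mem_branch (ht : IsGate G X t) (hz : z ∈ branch G X f t) :
    ReachableIn G Xᶜ z t := by
  rcases hz with rfl | hz
  exacts [.refl ht.notMem, hz.2]

theorem IsGate.mem_image_of_mem_branch (ht : IsGate G X t) (hf : IsDescent G Xᶜ f ρ)
    (hw : ReachableIn G Xᶜ w t) (hz : z ∈ branch G X f t) (hzw : z ≠ w) : z ∈ f '' Xᶜ := by
  rcases hz with rfl | hz
  exacts [(ht.eq_or_mem_image hf hw).resolve_left hzw.symm, hz.1]

theorem IsGate.eq_or_map_mem_branch (ht : IsGate G X t) (hf : IsDescent G Xᶜ f ρ)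
    (hw : ReachableIn G Xᶜ w t) : w = t ∨ f w ∈ branch G X f t := by
  refine or_iff_not_imp_left.mpr fun hwt => .inr ⟨mem_image_of_mem f hw.left_mem, ?_⟩
  have hadj := hf.adj w hw.left_mem
  exact .head (fun hfw => hwt (ht.eq_of_adj w _ hw hfw hadj)) hadj.symm hw

theorem IsGate.mem_branch_or_exists_adj (ht : IsGate G X t) (hf : IsDescent G Xᶜ f ρ)
    (hw : ReachableIn G Xᶜ w t) : w ∈ branch G X f t ∨ ∃ b ∈ branch G X f t, G.Adj w b :=
  (ht.eq_or_map_mem_branch hf hw).imp .inl fun hfw => ⟨f w, hfw, hf.adj w hw.left_mem⟩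

theorem IsGate.connected_induce_branch_union (ht : IsGate G X t) (hf : IsDescent G Xᶜ f ρ)
    {Y : Set V} (hY : ∀ y ∈ Y, G.Adj t y) : (G.induce (branch G X f t ∪ Y)).Connected := by
  have ht_mem : t ∈ branch G X f t := mem_insert t _
  have hbranch : (G.induce (branch G X f t)).Connected := by
    refine connected_induce_of_reachableIn ht_mem fun w hw => .symm ?_
    induction w using (measure ρ).wf.induction with
    | h w ih =>
      have hwt := ht.reachableIn_of_mem_branch hw
      rcases ht.eq_or_map_mem_branch hf hwt with rfl | hfw
      · exact .refl hw
      · exact .head hw (hf.adj w hwt.left_mem) (ih (f w) (hf.lt w hwt.left_mem) hfw)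
  exact connected_induce_of_dominated hbranch subset_union_left
    fun y hy => hy.imp_right fun hy => ⟨t, ht_mem, (hY y hy).symm⟩

/-- A colouring with colours in `f '' Xᶜ` which fits the gate `t`: each parent is its own colour and
the colour `f t` is shared by the neighbours of `t` in `X` and, if it is not a parent, by `t`. -/
structure IsGateColoring (G : SimpleGraph V) (X : Set V) (f : V → V) (c : V → V) (t : V) :
    Prop where
  image : ∀ p ∈ f '' Xᶜ, c p = p
  neighbor : ∀ x ∈ X, G.Adj t x → c x = f t
  gate : t ∉ f '' Xᶜ → c t = f t

theorem IsGate.hasRainbowTree (ht : IsGate G X t) (hf : IsDescent G Xᶜ f ρ) {c : V → V}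
    (hc : IsGateColoring G X f c t) {S Y : Set V} {p : V} (hpS : p ∈ S)
    (hp : ReachableIn G Xᶜ p t) (hY : Y.Subsingleton) (hYX : ∀ y ∈ Y, y ∈ X ∧ G.Adj t y)
    (hS : ∀ z ∈ S, ReachableIn G Xᶜ z t ∨ G.Adj t z ∨ ∃ y ∈ Y, G.Adj z y) :
    HasRainbowTree G c (f '' Xᶜ) S := by
  have color (z) (hz : z ∈ (branch G X f t ∪ Y) \ S) :
      z ∈ f '' Xᶜ ∧ z ∉ X ∧ c z = z ∨ z ∈ Y ∧ c z = f t := by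
    rcases hz with ⟨hz | hz, hzS⟩
    · have hzP := ht.mem_image_of_mem_branch hf hp hz (ne_of_mem_of_not_mem hpS hzS).symm
      exact .inl ⟨hzP, (ht.reachableIn_of_mem_branch hz).left_mem, hc.image z hzP⟩
    · exact .inr ⟨hz, hc.neighbor z (hYX z hz).1 (hYX z hz).2⟩
  have hft := ht.map_mem hf
  refine hasRainbowTree_of_dominating
    (ht.connected_induce_branch_union hf fun y hy => (hYX y hy).2) (fun z hz => ?_) ?_ ?_
  · rcases hS z hz with hzt | htz | ⟨y, hy, hzy⟩
    · exact (ht.mem_branch_or_exists_adj hf hzt).imp .inl fun ⟨b, hb, hzb⟩ => ⟨b, .inl hb, hzb⟩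
    · exact .inr ⟨t, .inl (mem_insert t _), htz.symm⟩
    · exact .inr ⟨y, .inr hy, hzy⟩
  · intro z hz z' hz' h
    rcases color z hz with ⟨-, hzX, hcz⟩ | ⟨hzY, hcz⟩ <;>
      rcases color z' hz' with ⟨-, hzX', hcz'⟩ | ⟨hzY', hcz'⟩
    · exact hcz ▸ hcz' ▸ h
    · grind
    · grind
    · exact hY hzY hzY'
  · intro z hz
    rcases color z hz with ⟨hzP, -, hcz⟩ | ⟨-, hcz⟩ <;> rw [hcz]
    exacts [hzP, mem_image_of_mem f ht.notMem]

theorem hasRvxColoring_addVertex_of_forest (hf : IsDescent G Xᶜ f ρ) (hl : Xᶜ.encard ≤ l)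
    (hX : Xᶜ.Nonempty) {c : V → V} (hc : ∀ p ∈ f '' Xᶜ, c p = p)
    (h : ∀ S : Set V, ∀ p ∈ S, p ∉ X → HasRainbowTree G c (f '' Xᶜ) S) :
    hasRvxColoring (addVertex G X) k l := by
  obtain ⟨r, hr⟩ := hX
  refine hasRvxColoring_of_palette (fun o => o.elim (f r) c) ((encard_image_le f _).trans hl)
    fun S _ => ?_
  by_cases hS : none ∈ S
  · refine (IsAnchored.image hf fun u _ => em (u ∈ X)).hasRainbowTree (fun s _ => ?_) ?_ ?_
    · exact or_iff_not_imp_left.mpr fun hs => .inr ⟨f s, mem_image_of_mem f hs, hf.adj s hs⟩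
    · rintro _ ⟨rfl | ⟨p, hp, rfl⟩, hpS⟩ _ ⟨rfl | ⟨q, hq, rfl⟩, hqS⟩ hpq <;> grind
    · rintro _ ⟨rfl | ⟨p, hp, rfl⟩, hpS⟩ <;> grind
  obtain ⟨S, rfl⟩ := exists_image_some_eq hS
  by_cases hSX : S ⊆ X
  · refine IsAnchored.hasRainbowTree (A := ∅) (by simp [IsAnchored]) (fun s hs => ?_) ?_ ?_
    · exact .inl (hSX ((Option.some_injective V).mem_set_image.mp hs))
    · exact ((subsingleton_singleton (a := none)).anti (by simp)).injOn _
    · rintro _ ⟨rfl | ⟨_, ⟨⟩, _⟩, -⟩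
      exact mem_image_of_mem f hr
  · obtain ⟨p, hpS, hp⟩ := not_subset.mp hSX
    exact .map (addVertexEmbedding G X) (c := fun o => o.elim (f r) c) (h S p hpS hp)

end Gate

section Pair

variable {V : Type*} {G : SimpleGraph V} {X U Z : Set V} {c : V → ℕ} {l : ℕ} {a b : V}

/-- In the graph with the new vertex, the new vertex and the old vertices `a` and `b` have a
Steiner tree which is rainbow for the old colouring `c`. -/
def HasRainbowPair (G : SimpleGraph V) (X : Set V) (c : V → ℕ) (l : ℕ) (a b : V) : Prop :=
  HasRainbowTree (addVertex G X) (fun o => o.elim 0 c) (Iio l) {none, some a, some b}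

theorem HasRainbowPair.symm (h : HasRainbowPair G X c l a b) : HasRainbowPair G X c l b a := by
  rwa [HasRainbowPair, pair_comm]

theorem hasRvxColoring_addVertex_of_hasRainbowPair
    (hc : ∀ S : Set V, S.encard = 3 → HasRainbowTree G c (Iio l) S)
    (h : ∀ a b, a ≠ b → HasRainbowPair G X c l a b) : hasRvxColoring (addVertex G X) 3 l := by
  refine hasRvxColoring_iff.mpr ⟨fun o => o.elim 0 c, fun S hS => ?_⟩
  by_cases hnone : none ∈ S
  · obtain ⟨S, rfl⟩ : ∃ S₀ : Set V, insert none (some '' S₀) = S :=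
      ⟨some ⁻¹' S, by ext (_ | _) <;> simp [hnone]⟩
    rw [encard_insert_of_notMem (by simp), (Option.some_injective V).encard_image] at hS
    have hS2 : S.encard = 2 :=
      ENat.add_left_injective_of_ne_top ENat.one_ne_top (hS.trans (by norm_num))
    obtain ⟨a, b, hab, rfl⟩ := encard_eq_two.mp hS2
    rw [image_pair]
    exact h a b hab
  · obtain ⟨S, rfl⟩ := exists_image_some_eq hnone
    rw [(Option.some_injective V).encard_image] at hS
    exact .map (addVertexEmbedding G X) (c := fun o => o.elim 0 c) (hc S hS)

theorem IsAnchored.hasRainbowPair {A : Set V} (hA : IsAnchored G X A) (ha : a ∈ A) (hb : b ∈ A)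
    (hinj : InjOn c (A \ {a, b})) (hmaps : MapsTo c (A \ {a, b}) (Iio l)) :
    HasRainbowPair G X c l a b := by
  refine ⟨_, hA.connected_induce, by grind, ?_, ?_⟩
  · rintro _ ⟨rfl | ⟨u, hu, rfl⟩, huS⟩ _ ⟨rfl | ⟨v, hv, rfl⟩, hvS⟩ huv <;> grind [InjOn]
  · rintro _ ⟨rfl | ⟨u, hu, rfl⟩, huS⟩ <;> grind [MapsTo]

theorem hasRainbowPair_of_isAnchored_sdiff {z : V} (hinj : InjOn c (U \ {a, b, z}))
    (hmaps : MapsTo c (U \ {a, b, z}) (Iio l)) (hz : z ∈ Z) (ha : a ∈ U \ Z) (hb : b ∈ U \ Z)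
    (hU : IsAnchored G X (U \ Z)) : HasRainbowPair G X c l a b := by
  have : (U \ Z) \ {a, b} ⊆ U \ {a, b, z} := by grind
  exact hU.hasRainbowPair ha hb (hinj.mono this) (hmaps.mono_left this)

theorem isAnchored_sdiff_of_not_adj (hU : (G.induce U).Connected) (hUZ : (U ∩ Z).Nonempty)
    (hsep : ∀ w ∉ X, w ∉ Z → ∀ z ∈ Z, ¬G.Adj w z) : IsAnchored G X (U \ Z) := by
  rintro u ⟨huU, huZ⟩
  by_cases huX : u ∈ X
  · exact ⟨u, huX, .refl ⟨huU, huZ⟩⟩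
  obtain ⟨z, hzU, hzZ⟩ := hUZ
  obtain ⟨w, y, huw, ⟨hyU, hy⟩, hwy⟩ := (reachableIn_of_connected_induce hU huU hzU).exists_exit
    (Q := (X ∪ Z)ᶜ) (by grind) (by grind)
  have hw := huw.right_mem
  have hyZ : y ∉ Z := fun hyZ => hsep w (by grind) (by grind) y hyZ hwy
  have hwU : w ∈ U \ Z := by grind
  exact ⟨y, by grind, (huw.mono (by grind)).trans (.of_adj hwy hwU ⟨hyU, hyZ⟩)⟩

theorem hasRainbowPair_of_not_adj (hc : ∀ S : Set V, S.encard = 3 → HasRainbowTree G c (Iio l) S)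
    (hab : a ≠ b) (ha : a ∉ Z) (hb : b ∉ Z) (hZ : Z.Nonempty)
    (hsep : ∀ w ∉ X, w ∉ Z → ∀ z ∈ Z, ¬G.Adj w z) : HasRainbowPair G X c l a b := by
  obtain ⟨z, hz⟩ := hZ
  obtain ⟨U, hU, hSU, hinj, hmaps⟩ := hc {a, b, z} (encard_eq_three.mpr ⟨a, b, z, by grind⟩)
  exact hasRainbowPair_of_isAnchored_sdiff hinj hmaps hz (by grind) (by grind)
    (isAnchored_sdiff_of_not_adj hU ⟨z, hSU (by simp), hz⟩ hsep)

theorem hasRainbowPair_of_mem (ha : a ∈ X) (hb : b ∈ X) : HasRainbowPair G X c l a b := by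
  refine IsAnchored.hasRainbowPair (A := {a, b}) ?_ (by simp) (by simp) (by simp) (by simp [MapsTo])
  rintro u (rfl | rfl)
  exacts [⟨_, ha, .refl (by simp)⟩, ⟨_, hb, .refl (by simp)⟩]

theorem reachableIn_of_not_hasRainbowPair
    (hc : ∀ S : Set V, S.encard = 3 → HasRainbowTree G c (Iio l) S) (hab : a ≠ b)
    (h : ¬HasRainbowPair G X c l a b) {w : V} (hw : w ∉ X) :
    ReachableIn G Xᶜ w a ∨ ReachableIn G Xᶜ w b := by
  by_contra! hwab
  refine h (hasRainbowPair_of_not_adj (Z := {z | ReachableIn G Xᶜ w z}) hc hab hwab.1 hwab.2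
    ⟨w, .refl hw⟩ fun u hu huZ z hz huz => huZ ?_)
  exact hz.trans (.of_adj huz.symm hz.right_mem hu)

theorem exists_adj_of_not_hasRainbowPair
    (hc : ∀ S : Set V, S.encard = 3 → HasRainbowTree G c (Iio l) S) (hab : a ≠ b)
    (h : ¬HasRainbowPair G X c l a b) {x : V} (hxa : x ≠ a) (hxb : x ≠ b) :
    ∃ w ∉ X, G.Adj w x := by
  by_contra! hx
  refine h (hasRainbowPair_of_not_adj (Z := {x}) hc hab hxa.symm hxb.symm (singleton_nonempty x) ?_)
  rintro w hw - _ rfl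
  exact hx w hw

end Pair

section GatePair

variable {V : Type*} {G : SimpleGraph V} {X U : Set V} {t t' : V} {l : ℕ}

/-- `G - X` consists of two components, with gates `t` and `t'`, whose neighbourhoods in `X`
partition `X`. -/
structure IsGatePair (G : SimpleGraph V) (X : Set V) (t t' : V) : Prop where
  left : IsGate G X t
  right : IsGate G X t'
  not_reachableIn : ¬ReachableIn G Xᶜ t t'
  reachableIn : ∀ w ∉ X, ReachableIn G Xᶜ w t ∨ ReachableIn G Xᶜ w t'
  adj : ∀ x ∈ X, G.Adj t x ∨ G.Adj t' x
  not_adj : ∀ x ∈ X, G.Adj t x → ¬G.Adj t' x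

namespace IsGatePair

theorem symm (h : IsGatePair G X t t') : IsGatePair G X t' t where
  left := h.right
  right := h.left
  not_reachableIn ht := h.not_reachableIn ht.symm
  reachableIn w hw := (h.reachableIn w hw).symm
  adj x hx := (h.adj x hx).symm
  not_adj x hx h' ht := h.not_adj x hx ht h'

theorem not_reachableIn_of_reachableIn (h : IsGatePair G X t t') {w : V}
    (hw : ReachableIn G Xᶜ w t) : ¬ReachableIn G Xᶜ w t' :=
  fun hw' => h.not_reachableIn (hw.symm.trans hw')

theorem exists_adj_of_connected (h : IsGatePair G X t t') (hU : (G.induce U).Connected)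
    {a b x : V} (ha : a ∈ U) (hat : ReachableIn G Xᶜ a t) (hb : b ∈ U)
    (hbt : ReachableIn G Xᶜ b t') (hx : x ∈ X) (hxt : G.Adj t x)
    (hlink : ¬∃ y ∈ X, G.Adj t' y ∧ G.Adj x y) : ∃ y ∈ X, y ∈ U \ {x} ∧ G.Adj t y := by
  have hbx : b ≠ x := (ne_of_mem_of_not_mem hx hbt.left_mem).symm
  obtain ⟨u, y, hau, ⟨hyU, hy⟩, huy⟩ :=
    (reachableIn_of_connected_induce hU ha hb).exists_exit
      (Q := insert x {w | ReachableIn G Xᶜ w t}) (.inr hat)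
      (fun hb => hb.elim hbx (h.symm.not_reachableIn_of_reachableIn hbt))
  have hyx : y ≠ x := fun hyx => hy (.inl hyx)
  rcases hau.right_mem.2 with rfl | hut
  · by_cases hyX : y ∈ X
    · exact ⟨y, hyX, ⟨hyU, hyx⟩, (h.adj y hyX).resolve_right fun hy' => hlink ⟨y, hyX, hy', huy⟩⟩
    · have hyt' := (h.reachableIn y hyX).resolve_left fun hyt => hy (.inr hyt)
      obtain rfl := h.right.eq_of_adj y _ hyt' hx huy.symm
      exact absurd huy.symm (h.not_adj _ hx hxt)
  · have hyX : y ∈ X := by_contra fun hyX => hy (.inr (.head hyX huy.symm hut))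
    exact ⟨y, hyX, ⟨hyU, hyx⟩, h.left.eq_of_adj u y hut hyX huy ▸ huy⟩

theorem isAnchored_sdiff_singleton (h : IsGatePair G X t t') (hU : (G.induce U).Connected)
    {a b x : V} (ha : a ∈ U) (hat : ReachableIn G Xᶜ a t) (hb : b ∈ U)
    (hbt : ReachableIn G Xᶜ b t') (hx : x ∈ X) (hxt : G.Adj t x)
    (hlink : ¬∃ y ∈ X, G.Adj t' y ∧ G.Adj x y) : IsAnchored G X (U \ {x}) := by
  rintro u ⟨huU, hux⟩
  by_cases huX : u ∈ X
  · exact ⟨u, huX, .refl ⟨huU, hux⟩⟩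
  have lift (s : V) : U ∩ {w | ReachableIn G Xᶜ w s} ⊆ U \ {x} := fun w hw =>
    ⟨hw.1, fun hwx => hw.2.left_mem (hwx ▸ hx)⟩
  rcases h.reachableIn u huX with hut | hut'
  · have hut := (h.left.reachableIn_inter hU huU hut hb
      (h.symm.not_reachableIn_of_reachableIn hbt)).1.mono (lift t)
    obtain ⟨y, hyX, hyU, hty⟩ := h.exists_adj_of_connected hU ha hat hb hbt hx hxt hlink
    exact ⟨y, hyX, hut.trans (.of_adj hty hut.right_mem hyU)⟩
  · obtain ⟨hut', y, ⟨hyU, hyX⟩, hty⟩ := h.right.reachableIn_inter hU huU hut' ha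
      (h.not_reachableIn_of_reachableIn hat)
    replace hut' := hut'.mono (lift t')
    have hyx : y ≠ x := fun hyx => h.not_adj x hx hxt (hyx ▸ hty)
    exact ⟨y, hyX, hut'.trans (.of_adj hty hut'.right_mem ⟨hyU, hyx⟩)⟩

theorem exists_adj_of_not_hasRainbowPair (h : IsGatePair G X t t') {c : V → ℕ}
    (hc : ∀ S : Set V, S.encard = 3 → HasRainbowTree G c (Iio l) S) {a b : V}
    (hat : ReachableIn G Xᶜ a t) (hbt : ReachableIn G Xᶜ b t')
    (hfail : ¬HasRainbowPair G X c l a b) {x : V} (hx : x ∈ X) (hxt : G.Adj t x) :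
    ∃ y ∈ X, G.Adj t' y ∧ G.Adj x y := by
  by_contra hlink
  have hax : a ≠ x := (ne_of_mem_of_not_mem hx hat.left_mem).symm
  have hbx : b ≠ x := (ne_of_mem_of_not_mem hx hbt.left_mem).symm
  have hab : a ≠ b := fun hab => h.not_reachableIn_of_reachableIn hat (hab ▸ hbt)
  obtain ⟨U, hU, hSU, hinj, hmaps⟩ :=
    hc {a, b, x} (encard_eq_three.mpr ⟨a, b, x, hab, hax, hbx, rfl⟩)
  have ha : a ∈ U := hSU (by simp)
  have hb : b ∈ U := hSU (by simp)
  exact hfail <|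
    hasRainbowPair_of_isAnchored_sdiff hinj hmaps (mem_singleton x) ⟨ha, hax⟩ ⟨hb, hbx⟩ <|
    h.isAnchored_sdiff_singleton hU ha hat hb hbt hx hxt hlink

end IsGatePair

theorem IsGate.isGatePair (ht : IsGate G X t) (ht' : IsGate G X t') (htt' : ¬ReachableIn G Xᶜ t t')
    {c : V → ℕ} (hc : ∀ S : Set V, S.encard = 3 → HasRainbowTree G c (Iio l) S) {a b : V}
    (hat : ReachableIn G Xᶜ a t) (hbt : ReachableIn G Xᶜ b t') (hfail : ¬HasRainbowPair G X c l a b)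
    (hdisj : ∀ x ∈ X, G.Adj t x → ¬G.Adj t' x) : IsGatePair G X t t' := by
  have hab : a ≠ b := fun hab => htt' (hat.symm.trans (hab ▸ hbt))
  have reach {w : V} (hw : w ∉ X) : ReachableIn G Xᶜ w t ∨ ReachableIn G Xᶜ w t' :=
    (reachableIn_of_not_hasRainbowPair hc hab hfail hw).imp (·.trans hat) (·.trans hbt)
  refine ⟨ht, ht', htt', fun w hw => reach hw, fun x hx => ?_, hdisj⟩
  obtain ⟨w, hw, hwx⟩ := exists_adj_of_not_hasRainbowPair hc hab hfail
    (ne_of_mem_of_not_mem hx hat.left_mem) (ne_of_mem_of_not_mem hx hbt.left_mem)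
  exact (reach hw).imp (fun hwt => ht.eq_of_adj w x hwt hx hwx ▸ hwx)
    fun hwt => ht'.eq_of_adj w x hwt hx hwx ▸ hwx

end GatePair

section TwoComponents

variable {V : Type*} {G : SimpleGraph V} {X : Set V} {f : V → V} {ρ : V → ℕ} {t t' : V} {k l : ℕ}

namespace IsGatePair

theorem map_ne_map (h : IsGatePair G X t t') (hf : IsDescent G Xᶜ f ρ) : f t ≠ f t' := fun hft =>
  h.not_adj _ (h.left.map_mem hf) (hf.adj t h.left.notMem) (hft ▸ hf.adj t' h.right.notMem)

theorem mem_branch_or_exists_adj (h : IsGatePair G X t t') (hf : IsDescent G Xᶜ f ρ) (v : V) :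
    v ∈ branch G X f t ∪ branch G X f t' ∨ ∃ d ∈ branch G X f t ∪ branch G X f t', G.Adj v d := by
  by_cases hvX : v ∈ X
  · exact .inr <| (h.adj v hvX).elim (fun hv => ⟨t, .inl (mem_insert t _), hv.symm⟩)
      fun hv => ⟨t', .inr (mem_insert t' _), hv.symm⟩
  · rcases h.reachableIn v hvX with hv | hv
    · exact (h.left.mem_branch_or_exists_adj hf hv).imp .inl fun ⟨d, hd, hvd⟩ => ⟨d, .inl hd, hvd⟩
    · exact (h.right.mem_branch_or_exists_adj hf hv).imp .inr fun ⟨d, hd, hvd⟩ => ⟨d, .inr hd, hvd⟩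

theorem hasRainbowTree_of_adj (h : IsGatePair G X t t') (hf : IsDescent G Xᶜ f ρ) {c : V → V}
    (hc : IsGateColoring G X f c t) (hc' : IsGateColoring G X f c t') {S : Set V} {p z s s' : V}
    (hpS : p ∈ S) (hp : ReachableIn G Xᶜ p t) (hzS : z ∈ S)
    (hz : ReachableIn G Xᶜ z t' ∨ z = s') (hs : s ∈ X) (hts : G.Adj t s) (hs' : s' ∈ X)
    (hts' : G.Adj t' s') (hss' : G.Adj s s') : HasRainbowTree G c (f '' Xᶜ) S := by
  have ht := h.left
  have ht' := h.right
  have color (v) (hv : v ∈ (branch G X f t ∪ {s} ∪ (branch G X f t' ∪ {s'})) \ S) :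
      v ∈ f '' Xᶜ ∧ v ∉ X ∧ c v = v ∨ v = s ∧ c v = f t ∨
        c v = f t' ∧ (v = s' ∨ v = t' ∧ s' ∈ S) := by
    rcases hv with ⟨(hv | rfl) | (hv | rfl), hvS⟩
    · have hvP := ht.mem_image_of_mem_branch hf hp hv (ne_of_mem_of_not_mem hpS hvS).symm
      exact .inl ⟨hvP, (ht.reachableIn_of_mem_branch hv).left_mem, hc.image v hvP⟩
    · exact .inr (.inl ⟨rfl, hc.neighbor v hs hts⟩)
    · by_cases hvP : v ∈ f '' Xᶜ
      · exact .inl ⟨hvP, (ht'.reachableIn_of_mem_branch hv).left_mem, hc'.image v hvP⟩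
      obtain rfl : v = t' := hv.resolve_right fun hv => hvP hv.1
      have hzs' : z = s' := hz.resolve_left fun hz =>
        hvP (ht'.mem_image_of_mem_branch hf hz hv (ne_of_mem_of_not_mem hzS hvS).symm)
      exact .inr (.inr ⟨hc'.gate hvP, .inr ⟨rfl, hzs' ▸ hzS⟩⟩)
    · exact .inr (.inr ⟨hc'.neighbor v hs' hts', .inl rfl⟩)
  have hft := ht.map_mem hf
  have hft' := ht'.map_mem hf
  have hne := h.map_ne_map hf
  have hD : (G.induce (branch G X f t ∪ {s} ∪ (branch G X f t' ∪ {s'}))).Connected :=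
    SimpleGraph.connected_induce_union
      (ht.connected_induce_branch_union hf (by simpa)).preconnected
      (ht'.connected_induce_branch_union hf (by simpa)).preconnected (by simp) (by simp) hss'
  refine hasRainbowTree_of_dominating hD (fun v _ => ?_) ?_ ?_
  · grind [h.mem_branch_or_exists_adj hf v]
  · intro v hv w hw hvw
    have := hv.2
    have := hw.2
    grind
  · intro v hv
    have hftP : f t ∈ f '' Xᶜ := mem_image_of_mem f ht.notMem
    have hftP' : f t' ∈ f '' Xᶜ := mem_image_of_mem f ht'.notMem
    grind

theorem hasRainbowTree (h : IsGatePair G X t t') (hf : IsDescent G Xᶜ f ρ) {c : V → V}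
    (hc : IsGateColoring G X f c t) (hc' : IsGateColoring G X f c t')
    (hlink : ∀ x ∈ X, G.Adj t' x → ∃ y ∈ X, G.Adj t y ∧ G.Adj x y) {S : Set V} {p : V}
    (hpS : p ∈ S) (hp : ReachableIn G Xᶜ p t) : HasRainbowTree G c (f '' Xᶜ) S := by
  by_cases hS : ∀ z ∈ S, ReachableIn G Xᶜ z t ∨ G.Adj t z
  · exact h.left.hasRainbowTree hf hc hpS hp subsingleton_empty (by simp)
      fun z hz => (hS z hz).imp_right .inl
  push Not at hS
  obtain ⟨z, hzS, hzt, htz⟩ := hS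
  obtain ⟨s', hs', hts', hz⟩ :
      ∃ s' ∈ X, G.Adj t' s' ∧ (ReachableIn G Xᶜ z t' ∨ z = s') := by
    by_cases hzX : z ∈ X
    · exact ⟨z, hzX, (h.adj z hzX).resolve_left htz, .inr rfl⟩
    · exact ⟨f t', h.right.map_mem hf, hf.adj t' h.right.notMem,
        .inl ((h.reachableIn z hzX).resolve_left hzt)⟩
  obtain ⟨s, hs, hts, hss'⟩ := hlink s' hs' hts'
  exact h.hasRainbowTree_of_adj hf hc hc' hpS hp hzS hz hs hts hs' hts' hss'.symm

theorem exists_isGateColoring (h : IsGatePair G X t t') (hf : IsDescent G Xᶜ f ρ) :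
    ∃ c, IsGateColoring G X f c t ∧ IsGateColoring G X f c t' := by
  classical
  have image_inter (x) (hx : x ∈ X) (hxP : x ∈ f '' Xᶜ) : x = f t ∨ x = f t' := by
    obtain ⟨w, hw, rfl⟩ := hxP
    refine (h.reachableIn w hw).imp (fun hwt => ?_) fun hwt => ?_
    · rw [h.left.eq_of_adj w _ hwt hx (hf.adj w hw)]
    · rw [h.right.eq_of_adj w _ hwt hx (hf.adj w hw)]
  have hadj := hf.adj t h.left.notMem
  have hadj' := hf.adj t' h.right.notMem
  have hne : t ≠ t' := fun hne => h.not_reachableIn (hne ▸ .refl h.left.notMem)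
  have hnadj : ¬G.Adj t t' := fun htt' =>
    h.not_reachableIn (.of_adj htt' h.left.notMem h.right.notMem)
  refine ⟨fun z => if z ∈ f '' Xᶜ then z else if z = t ∨ G.Adj t z then f t else f t',
    ⟨fun p hp => if_pos hp, fun x hx hxt => ?_, fun ht => ?_⟩,
    ⟨fun p hp => if_pos hp, fun x hx hxt => ?_, fun ht => ?_⟩⟩
  · have := image_inter x hx
    have := h.not_adj x hx hxt
    grind
  · simp [ht]
  · have := image_inter x hx
    have := h.symm.not_adj x hx hxt
    have := ne_of_mem_of_not_mem hx h.left.notMem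
    grind
  · grind

theorem hasRvxColoring_addVertex (h : IsGatePair G X t t') (hf : IsDescent G Xᶜ f ρ)
    (hl : Xᶜ.encard ≤ l) (hlink : ∀ x ∈ X, G.Adj t x → ∃ y ∈ X, G.Adj t' y ∧ G.Adj x y)
    (hlink' : ∀ x ∈ X, G.Adj t' x → ∃ y ∈ X, G.Adj t y ∧ G.Adj x y) :
    hasRvxColoring (addVertex G X) k l := by
  obtain ⟨c, hc, hc'⟩ := h.exists_isGateColoring hf
  refine hasRvxColoring_addVertex_of_forest hf hl ⟨t, h.left.notMem⟩ hc.image fun S p hpS hp => ?_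
  rcases h.reachableIn p hp with hpt | hpt
  · exact h.hasRainbowTree hf hc hc' hlink' hpS hpt
  · exact h.symm.hasRainbowTree hf hc' hc hlink hpS hpt

end IsGatePair

theorem IsGate.hasRvxColoring_addVertex (ht : IsGate G X t) (hG : G.Connected)
    (hf : IsDescent G Xᶜ f ρ) (hl : Xᶜ.encard ≤ l) (hW : ∀ w ∉ X, ReachableIn G Xᶜ w t) {z : V}
    (hz : ∀ x ∈ X, x ≠ z → G.Adj t x) : hasRvxColoring (addVertex G X) k l := by
  classical
  have hc : IsGateColoring G X f (fun v => if v ∈ f '' Xᶜ then v else f t) t := by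
    refine ⟨fun p hp => if_pos hp, fun x hx _ => ?_, fun ht => if_neg ht⟩
    by_cases hxP : x ∈ f '' Xᶜ
    · obtain ⟨w, hw, rfl⟩ := id hxP
      rw [if_pos hxP, ht.eq_of_adj w _ (hW w hw) hx (hf.adj w hw)]
    · exact if_neg hxP
  refine hasRvxColoring_addVertex_of_forest hf hl ⟨t, ht.notMem⟩ hc.image fun S p hpS hp => ?_
  by_cases hzt : z ∉ X ∨ G.Adj t z
  · refine ht.hasRainbowTree hf hc hpS (hW p hp) subsingleton_empty (by simp) fun v _ => ?_
    grind
  push Not at hzt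
  obtain ⟨y, hzy⟩ : ∃ y, G.Adj z y := by
    have : Nontrivial V := ⟨z, t, ne_of_mem_of_not_mem hzt.1 ht.notMem⟩
    exact hG.preconnected.exists_adj_of_nontrivial z
  have hyX : y ∈ X := by_contra fun hy =>
    hzt.2 (ht.eq_of_adj y z (hW y hy) hzt.1 hzy.symm ▸ hzy.symm)
  refine ht.hasRainbowTree hf hc hpS (hW p hp) (subsingleton_singleton (a := y)) ?_ fun v _ => ?_
  · simpa using ⟨hyX, hz y hyX hzy.ne'⟩
  · grind

end TwoComponents

section Main

variable {V : Type*} {G : SimpleGraph V} {X : Set V} {k l : ℕ}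

theorem hasRvxColoring_card_sub_one [Fintype V] [Nontrivial V] (hG : G.Connected) :
    hasRvxColoring G k (Fintype.card V - 1) := by
  obtain ⟨x⟩ := hG.nonempty
  refine hasRvxColoring_of_connected hG (x := x) ?_
  classical
  rw [← Finset.coe_singleton, ← Finset.coe_compl, encard_coe_eq_coe_finsetCard, Finset.card_compl,
    Finset.card_singleton]

theorem hasRvxColoring_rvx [Finite V] [Nontrivial V] (hG : G.Connected) :
    hasRvxColoring G k (rvx G k) :=
  have := Fintype.ofFinite V
  Nat.sInf_mem (s := {m | hasRvxColoring G k m}) ⟨_, hasRvxColoring_card_sub_one hG⟩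

theorem rvx_lt_card [Fintype V] [Nontrivial V] (hG : G.Connected) : rvx G k < Fintype.card V :=
  (Nat.sInf_le (hasRvxColoring_card_sub_one hG)).trans_lt (Nat.sub_one_lt Fintype.card_ne_zero)

theorem exists_isGate_of_not_hasRvxColoring (hG : G.Connected) (hX : X.Nonempty)
    (hl : Xᶜ.encard ≤ l) (h : ¬hasRvxColoring (addVertex G X) k l) {w : V} (hw : w ∉ X) :
    ∃ t, ReachableIn G Xᶜ w t ∧ IsGate G X t := by
  obtain ⟨y, hy⟩ := hX
  obtain ⟨f, hf⟩ := exists_isDescent_compl hG hy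
  obtain ⟨t, hwt, hft, -⟩ := hf.exists_reachableIn_map_mem hw
  refine ⟨t, hwt, hwt.right_mem, fun v x hvt hx hvx => by_contra fun hne => h ?_⟩
  exact hasRvxColoring_addVertex_of_reachableIn_compl hG hl hvt hne ⟨x, hx, hvx⟩
    ⟨f t, hft, hf.adj t hwt.right_mem⟩

theorem rvx_three_add_vertex_general (hG : G.Connected) (hX : X.Nonempty) (hl : Xᶜ.encard ≤ l)
    (hc : hasRvxColoring G 3 l) : hasRvxColoring (addVertex G X) 3 l := by
  by_contra hfail
  have gate {w : V} (hw : w ∉ X) := exists_isGate_of_not_hasRvxColoring hG hX hl hfail hw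
  obtain ⟨x, hx⟩ := hX
  obtain ⟨f, hf⟩ := exists_isDescent_compl hG hx
  obtain ⟨c, hc⟩ := hasRvxColoring_iff.mp hc
  obtain ⟨a, b, hab, hpair⟩ : ∃ a b, a ≠ b ∧ ¬HasRainbowPair G X c l a b := by
    by_contra! h
    exact hfail (hasRvxColoring_addVertex_of_hasRainbowPair hc h)
  wlog ha : a ∉ X generalizing a b
  · exact this b a hab.symm (fun h => hpair h.symm)
      fun hb => hpair (hasRainbowPair_of_mem (not_not.mp ha) hb)
  obtain ⟨t, hat, ht⟩ := gate ha
  have reach {w : V} (hw : w ∉ X) := reachableIn_of_not_hasRainbowPair hc hab hpair hw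
  have neighbor {x : V} (hx : x ∈ X) (hxb : x ≠ b) : ∃ w ∉ X, G.Adj w x :=
    exists_adj_of_not_hasRainbowPair hc hab hpair (ne_of_mem_of_not_mem hx ha) hxb
  by_cases hW : ∀ w ∉ X, ReachableIn G Xᶜ w t
  · refine hfail (ht.hasRvxColoring_addVertex hG hf hl hW (z := b) fun x hx hxb => ?_)
    obtain ⟨w, hw, hwx⟩ := neighbor hx hxb
    exact ht.eq_of_adj w x (hW w hw) hx hwx ▸ hwx
  push Not at hW
  obtain ⟨w, hw, hwt⟩ := hW
  have hwb : ReachableIn G Xᶜ w b := (reach hw).resolve_left fun hwa => hwt (hwa.trans hat)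
  obtain ⟨t', hbt', ht'⟩ := gate hwb.right_mem
  have htt' : ¬ReachableIn G Xᶜ t t' := fun htt' => hwt (hwb.trans (hbt'.trans htt'.symm))
  have hne : t ≠ t' := fun hne => htt' (hne ▸ .refl ht.notMem)
  have h : IsGatePair G X t t' := ht.isGatePair ht' htt' hc hat hbt' hpair fun _ hx htx htx' =>
    hfail <| hasRvxColoring_addVertex_of_common_neighbor hG hl hx ht.notMem ht'.notMem hne htx htx'
  exact hfail <| h.hasRvxColoring_addVertex hf hl
    (fun _ => h.exists_adj_of_not_hasRainbowPair hc hat hbt' hpair)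
    (fun _ => h.symm.exists_adj_of_not_hasRainbowPair hc hbt' hat fun h => hpair h.symm)

end Main

/-- adding a vertex `v` joined to `q ≥ n - ℓ` vertices of a connected graph `G`
of order `n` with `rvx_3(G) = ℓ` yields a graph `G'` with `rvx_3(G') ≤ ℓ`. -/
theorem rvx_three_add_vertex {V : Type*} [Fintype V] (G : SimpleGraph V)
    (hV : 2 ≤ Fintype.card V) (hconn : G.Connected)
    (l : ℕ) (hl : rvx G 3 = l) (X : Finset V) (q : ℕ) (hX : X.card = q)
    (hq : Fintype.card V - l ≤ q)
    (G' : SimpleGraph (Option V))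
    (hG' : G' = SimpleGraph.fromRel fun x y =>
      (∃ a b, x = some a ∧ y = some b ∧ G.Adj a b) ∨
        (x = none ∧ ∃ b ∈ X, y = some b)) :
    rvx G' 3 ≤ l := by
  classical
  subst hG'
  have : Nontrivial V := Fintype.one_lt_card_iff_nontrivial.mp hV
  have hlt : l < Fintype.card V := hl ▸ rvx_lt_card hconn
  have hXne : (X : Set V).Nonempty := Finset.coe_nonempty.mpr (Finset.card_pos.mp (by omega))
  have hXl : (X : Set V)ᶜ.encard ≤ l := by
    rw [← Finset.coe_compl, encard_coe_eq_coe_finsetCard, Finset.card_compl, Nat.cast_le]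
    omega
  exact Nat.sInf_le (rvx_three_add_vertex_general hconn hXne hXl (hl ▸ hasRvxColoring_rvx hconn))
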